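/- Under the algorithmic setting and local assumptions below, let c be the constant of the bound ‖d^k‖ ≤ c·dist(x^k, X*) (namely c := ν_min⁻¹ θ (2 + L_g)^{1+τ−δ} (1 + L_g + aL + ν̄(2 + L_g)^δ) + (L + 2aL)/(2ν_min β) + 2), and define ε₂ := min{1/(2 + L_g), 1/(a L_ψ ‖A‖), ε₀/(1 + c)}, ĉ := (c²L + 2acL_ψ‖A‖³ + 2βc ν̄)/(2β²) + θ, and c̃ := (1/β)·(c²L/2 + a c L_ψ ‖A‖³ + c ν̄ (2 + L_g)^δ + θ(2 + L_g)^{1+τ})^q. Then for every k ∈ K with x^k ∈ B_{ε₂}(x*): ‖r(x̂^k)‖ ≤ ĉ·‖r(x^k)‖^{min{δ+q, 1+τ}} and dist(x̂^k, X*) ≤ c̃·dist(x^k, X*)^{(1+δ)q}. -/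

import Mathlib

open scoped RealInnerProductSpace
open Filter Metric

noncomputable section

/-- The convex subdifferential of `g` at `y`. -/
def subdiff {n : ℕ} (g : EuclideanSpace ℝ (Fin n) → ℝ) (y : EuclideanSpace ℝ (Fin n)) :
    Set (EuclideanSpace ℝ (Fin n)) :=
  {v | ∀ z, g y + ⟪v, z - y⟫ ≤ g z}

/-- The proximity operator `prox_g(z)`, the (unique, for convex `g`) minimizer of
`y ↦ g y + (1/2)‖y − z‖²`. -/
noncomputable def proxPt {n : ℕ} (g : EuclideanSpace ℝ (Fin n) → ℝ)
    (z : EuclideanSpace ℝ (Fin n)) : EuclideanSpace ℝ (Fin n) :=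
  Classical.epsilon fun p => ∀ y, g p + (1 / 2) * ‖p - z‖ ^ 2 ≤ g y + (1 / 2) * ‖y - z‖ ^ 2

/-- The residual (prox-gradient) mapping `r(x) = x − prox_φ(x − ∇f(x))`. -/
noncomputable def resid {n : ℕ} (f φ : EuclideanSpace ℝ (Fin n) → ℝ)
    (x : EuclideanSpace ℝ (Fin n)) : EuclideanSpace ℝ (Fin n) :=
  x - proxPt φ (x - gradient f x)

/-- The smallest eigenvalue of a symmetric operator on ℝᵐ, as the infimum of its quadratic
form over the unit sphere. -/
noncomputable def lambdaMin {m : ℕ} (T : EuclideanSpace ℝ (Fin m) →L[ℝ] EuclideanSpace ℝ (Fin m)) :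
    ℝ :=
  ⨅ u : {u : EuclideanSpace ℝ (Fin m) // ‖u‖ = 1}, ⟪T u.1, u.1⟫

/-!
The residual `R` of an inexact step places `R - g - (H + μ I) (y - x)` in `∂φ(y - R)`, while
`-∇f(z) ∈ ∂φ(z)` for the projection `z` of `x` onto `X*`. Monotonicity of `∂φ` and of `H` then puts
`μ (y - x)` in a ball one of whose diameters has endpoints controlled by `R`, by the error of the
linear model of `∇f` at `z`, and by `z - x`. That model error is quadratic in `‖z - x‖`: the
Hessian is Lipschitz, and the shift `Λ` is itself `O(‖z - x‖)` because `∇²ψ` is positive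
semidefinite at `z`, so that `-λ_min ≤ ‖∇²ψ(Ax - b) - ∇²ψ(Az - b)‖`. Dividing by
`μ ≥ ν_min ‖r(x)‖^δ` and applying the error bound gives `‖y - x‖ ≤ c dist(x, X*)`. The residual at
`y` is in turn `R` plus the model error and the regularization term `μ (y - x)`, and the error bound
at `x` and at `y` converts its size into the two rates. On `K` the reference residual is the
current one, which brackets `μ_k` between multiples of `‖r(x^k)‖^δ`.
-/

theorem exists_forall_le_of_strongConvexOn {E : Type*} [NormedAddCommGroup E] [NormedSpace ℝ E]
    [FiniteDimensional ℝ E] {Φ : E → ℝ} {m : ℝ} (hm : 0 < m)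
    (hΦ : StrongConvexOn Set.univ m Φ) : ∃ y, ∀ z, Φ y ≤ Φ z := by
  have hcont : Continuous Φ :=
    (hΦ.strictConvexOn hm).convexOn.locallyLipschitz.continuous
  obtain ⟨w, -, hw⟩ := (isCompact_closedBall (0 : E) 1).exists_isMinOn
    ⟨0, mem_closedBall_self zero_le_one⟩ hcont.continuousOn
  refine hcont.exists_forall_le' 0 ?_
  filter_upwards [tendsto_norm_cocompact_atTop.eventually_ge_atTop
    (max 1 (1 + 2 * (Φ 0 - Φ w) / m))] with y hy
  obtain ⟨hy1, hyw⟩ := max_le_iff.1 hy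
  have hy0 : 0 < ‖y‖ := zero_lt_one.trans_le hy1
  have hw_le : Φ w ≤ Φ (‖y‖⁻¹ • y) :=
    hw (mem_closedBall_zero_iff.2 (by simp [norm_smul, hy0.ne']))
  have hconv := hΦ.2 (Set.mem_univ 0) (Set.mem_univ y) (sub_nonneg.2 (inv_le_one_of_one_le₀ hy1))
    (inv_nonneg.2 hy0.le) (sub_add_cancel 1 ‖y‖⁻¹)
  simp only [smul_zero, zero_add, zero_sub, norm_neg, smul_eq_mul] at hconv
  have hscaled : Φ w * ‖y‖ ≤ (‖y‖ - 1) * Φ 0 + Φ y - (‖y‖ - 1) * ‖y‖ * (m / 2) := by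
    calc Φ w * ‖y‖
        ≤ ((1 - ‖y‖⁻¹) * Φ 0 + ‖y‖⁻¹ * Φ y - (1 - ‖y‖⁻¹) * ‖y‖⁻¹ * (m / 2 * ‖y‖ ^ 2)) * ‖y‖ :=
          mul_le_mul_of_nonneg_right (hw_le.trans hconv) hy0.le
      _ = (‖y‖ - 1) * Φ 0 + Φ y - (‖y‖ - 1) * ‖y‖ * (m / 2) := by field_simp
  have hgap : Φ 0 - Φ w ≤ (‖y‖ - 1) * (m / 2) := by
    have := (div_le_iff₀ hm).1 (le_sub_iff_add_le'.2 hyw)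
    linarith
  nlinarith [mul_le_mul_of_nonneg_right hgap hy0.le]

theorem strongConvexOn_half_mul_norm_sub_sq {E : Type*} [NormedAddCommGroup E]
    [InnerProductSpace ℝ E] (z : E) :
    StrongConvexOn Set.univ 1 fun y ↦ (1 / 2 : ℝ) * ‖y - z‖ ^ 2 := by
  rw [strongConvexOn_iff_convex]
  have hlin : (fun y : E ↦ (1 / 2 : ℝ) * ‖y - z‖ ^ 2 - 1 / 2 * ‖y‖ ^ 2) =
      fun y ↦ -⟪z, y⟫ + 1 / 2 * ‖z‖ ^ 2 := by
    ext y
    rw [norm_sub_sq_real, real_inner_comm]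
    ring
  rw [hlin]
  exact ((-innerSL ℝ z : E →L[ℝ] ℝ).toLinearMap.convexOn convex_univ).add_const _

section Subdifferential

variable {n : ℕ} {φ : EuclideanSpace ℝ (Fin n) → ℝ}

theorem inner_sub_nonneg_of_mem_subdiff {p p' v v' : EuclideanSpace ℝ (Fin n)}
    (hv : v ∈ subdiff φ p) (hv' : v' ∈ subdiff φ p') : 0 ≤ ⟪v - v', p - p'⟫ := by
  have hflip : ⟪v, p' - p⟫ = -⟪v, p - p'⟫ := by rw [← inner_neg_right, neg_sub]
  rw [inner_sub_left]
  linarith [hv p', hv' p]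

theorem norm_sub_le_of_sub_mem_subdiff {p p' w w' : EuclideanSpace ℝ (Fin n)}
    (hp : w - p ∈ subdiff φ p) (hp' : w' - p' ∈ subdiff φ p') : ‖p - p'‖ ≤ ‖w - w'‖ := by
  have hmono := inner_sub_nonneg_of_mem_subdiff hp hp'
  rw [sub_sub_sub_comm, inner_sub_left, real_inner_self_eq_norm_sq] at hmono
  by_contra! hlt
  nlinarith [real_inner_le_norm (w - w') (p - p'), norm_nonneg (w - w')]

theorem isClosed_setOf_mem_subdiff (hφ : Continuous φ)
    {g : EuclideanSpace ℝ (Fin n) → EuclideanSpace ℝ (Fin n)} (hg : Continuous g) :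
    IsClosed {y | g y ∈ subdiff φ y} := by
  change IsClosed {y | ∀ z, φ y + ⟪g y, z - y⟫ ≤ φ z}
  rw [Set.ofPred_forall]
  exact isClosed_iInter fun z ↦ isClosed_le (by fun_prop) continuous_const

theorem neg_mem_subdiff_of_forall_add_le (hφ : ConvexOn ℝ Set.univ φ)
    {h : EuclideanSpace ℝ (Fin n) → ℝ} {g y : EuclideanSpace ℝ (Fin n)} (hg : HasGradientAt h g y)
    (hmin : ∀ z, φ y + h y ≤ φ z + h z) : -g ∈ subdiff φ y := by
  intro z
  set k : ℝ → ℝ := fun t ↦ t * (φ z - φ y) + h (y + t • (z - y)) with hk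
  have hderiv : HasDerivAt k (φ z - φ y + ⟪g, z - y⟫) 0 := by
    have hline : HasDerivAt (fun t : ℝ ↦ y + t • (z - y)) (z - y) 0 := by
      simpa using ((hasDerivAt_id (0 : ℝ)).smul_const (z - y)).const_add y
    have hcomp := HasFDerivAt.comp_hasDerivAt_of_eq (0 : ℝ) hg.hasFDerivAt hline (by simp)
    rw [InnerProductSpace.toDual_apply_apply] at hcomp
    exact (hasDerivAt_mul_const (φ z - φ y)).add hcomp
  have hkmin : ∀ t ∈ Set.Icc (0 : ℝ) 1, k 0 ≤ k t := by
    rintro t ⟨ht0, ht1⟩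
    have hφt := hφ.2 (Set.mem_univ y) (Set.mem_univ z) (sub_nonneg.2 ht1) ht0 (sub_add_cancel 1 t)
    have hline : (1 - t) • y + t • z = y + t • (z - y) := by module
    rw [hline, smul_eq_mul, smul_eq_mul] at hφt
    simp only [hk, zero_mul, zero_smul, add_zero, zero_add]
    linarith [hmin (y + t • (z - y))]
  have hnonneg := (IsMinOn.localize (f := k) hkmin).hasFDerivWithinAt_nonneg
    hderiv.hasFDerivAt.hasFDerivWithinAt (y := 1)
    (mem_posTangentConeAt_of_segment_subset (by simp [segment_eq_Icc]))
  simp only [ContinuousLinearMap.toSpanSingleton_apply, one_smul] at hnonneg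
  rw [inner_neg_left]
  linarith

end Subdifferential

section Prox

variable {n : ℕ} {φ : EuclideanSpace ℝ (Fin n) → ℝ}

theorem proxPt_add_half_norm_sub_sq_le (hφ : ConvexOn ℝ Set.univ φ)
    (z y : EuclideanSpace ℝ (Fin n)) :
    φ (proxPt φ z) + (1 / 2) * ‖proxPt φ z - z‖ ^ 2 ≤ φ y + (1 / 2) * ‖y - z‖ ^ 2 := by
  have hstrong : StrongConvexOn Set.univ 1 (φ + fun y ↦ (1 / 2 : ℝ) * ‖y - z‖ ^ 2) := by
    have hsum := (uniformConvexOn_zero.2 hφ).add (strongConvexOn_half_mul_norm_sub_sq z)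
    rwa [zero_add] at hsum
  exact Classical.epsilon_spec (exists_forall_le_of_strongConvexOn one_pos hstrong) y

theorem sub_proxPt_mem_subdiff (hφ : ConvexOn ℝ Set.univ φ) (z : EuclideanSpace ℝ (Fin n)) :
    z - proxPt φ z ∈ subdiff φ (proxPt φ z) := by
  have hgrad : HasGradientAt (fun y ↦ (1 / 2 : ℝ) * ‖y - z‖ ^ 2) (proxPt φ z - z)
      (proxPt φ z) := by
    rw [hasGradientAt_iff_hasFDerivAt]
    refine ((((hasFDerivAt_id (proxPt φ z)).sub_const z).norm_sq).const_mul
      (1 / 2 : ℝ)).congr_fderiv ?_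
    ext v
    simp
  rw [← neg_sub]
  exact neg_mem_subdiff_of_forall_add_le hφ hgrad (proxPt_add_half_norm_sub_sq_le hφ z)

/-- The proximal residual `y - prox_φ(y - g)` of the generalized equation `0 ∈ g + ∂φ(y)`. With
`g = ∇f(y)` it is the residual map `r`; with `g = ∇f(x) + G (y - x)` it is the residual of a
regularized Newton subproblem at `x`. -/
def proxResid (φ : EuclideanSpace ℝ (Fin n) → ℝ) (y g : EuclideanSpace ℝ (Fin n)) :
    EuclideanSpace ℝ (Fin n) :=
  y - proxPt φ (y - g)

theorem proxResid_sub_mem_subdiff (hφ : ConvexOn ℝ Set.univ φ) (y g : EuclideanSpace ℝ (Fin n)) :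
    proxResid φ y g - g ∈ subdiff φ (y - proxResid φ y g) := by
  have hmem := sub_proxPt_mem_subdiff hφ (y - g)
  rwa [sub_right_comm, ← sub_sub_cancel y (proxPt φ (y - g)), ← proxResid, sub_sub_cancel] at hmem

theorem proxResid_eq_zero (hφ : ConvexOn ℝ Set.univ φ) {y g : EuclideanSpace ℝ (Fin n)}
    (hy : -g ∈ subdiff φ y) : proxResid φ y g = 0 := by
  have hprox : y - g - y ∈ subdiff φ y := by rwa [sub_sub_cancel_left]
  have hle := norm_sub_le_of_sub_mem_subdiff hprox (sub_proxPt_mem_subdiff hφ (y - g))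
  rwa [sub_self, norm_zero, norm_le_zero_iff] at hle

theorem norm_proxResid_sub_proxResid_le (hφ : ConvexOn ℝ Set.univ φ)
    (y z g g' : EuclideanSpace ℝ (Fin n)) :
    ‖proxResid φ y g - proxResid φ z g'‖ ≤ 2 * ‖y - z‖ + ‖g - g'‖ := by
  have hprox : ‖proxPt φ (y - g) - proxPt φ (z - g')‖ ≤ ‖y - g - (z - g')‖ :=
    norm_sub_le_of_sub_mem_subdiff (sub_proxPt_mem_subdiff hφ _) (sub_proxPt_mem_subdiff hφ _)
  calc ‖proxResid φ y g - proxResid φ z g'‖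
      = ‖(y - z) - (proxPt φ (y - g) - proxPt φ (z - g'))‖ := by
        rw [proxResid, proxResid, sub_sub_sub_comm]
    _ ≤ ‖y - z‖ + ‖(y - z) - (g - g')‖ := by
        rw [← sub_sub_sub_comm y g z g']
        exact (norm_sub_le _ _).trans (by gcongr)
    _ ≤ 2 * ‖y - z‖ + ‖g - g'‖ := by linarith [norm_sub_le (y - z) (g - g')]

end Prox

section NewtonStep

theorem norm_le_add_of_inner_sub_sub_nonpos {E : Type*} [NormedAddCommGroup E]
    [InnerProductSpace ℝ E] {s t u : E} (h : ⟪s - u, s - t⟫ ≤ 0) : ‖s‖ ≤ ‖t‖ + ‖u‖ := by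
  -- `s` lies in the ball with diameter `[t, u]`.
  have hsq : ‖(s - u) + (s - t)‖ ^ 2 ≤ ‖(s - u) - (s - t)‖ ^ 2 := by
    rw [norm_add_sq_real (s - u), norm_sub_sq_real (s - u)]
    linarith
  have hball : ‖(s - u) + (s - t)‖ ≤ ‖t - u‖ := by
    rw [sub_sub_sub_cancel_left] at hsq
    exact le_of_sq_le_sq hsq (norm_nonneg _)
  have htwo : (2 : ℝ) • s = (t + u) + ((s - u) + (s - t)) := by module
  have hnorm : 2 * ‖s‖ ≤ (‖t‖ + ‖u‖) + (‖t‖ + ‖u‖) := by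
    calc 2 * ‖s‖ = ‖(t + u) + ((s - u) + (s - t))‖ := by rw [← htwo, norm_smul, Real.norm_two]
      _ ≤ ‖t + u‖ + ‖t - u‖ := (norm_add_le _ _).trans (by gcongr)
      _ ≤ (‖t‖ + ‖u‖) + (‖t‖ + ‖u‖) := add_le_add (norm_add_le _ _) (norm_sub_le _ _)
  linarith

variable {n : ℕ} {φ : EuclideanSpace ℝ (Fin n) → ℝ}

theorem mul_norm_sub_le_of_mem_subdiff
    {H : EuclideanSpace ℝ (Fin n) →L[ℝ] EuclideanSpace ℝ (Fin n)} {μ : ℝ}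
    {x y z g g' R : EuclideanSpace ℝ (Fin n)} (hH : ∀ u, 0 ≤ ⟪H u, u⟫) (hμ : 0 ≤ μ)
    (hy : R - (g + (H (y - x) + μ • (y - x))) ∈ subdiff φ (y - R))
    (hz : -g' ∈ subdiff φ z) :
    μ * ‖y - x‖ ≤ (1 + ‖H‖ + μ) * ‖R‖ + ‖g' - g - H (z - x)‖ + μ * ‖z - x‖ := by
  set s := y - x
  set t := R + (z - x)
  set e := R - H R + (g' - g - H (z - x))
  have hpoint : y - R - z = s - t := by simp only [s, t]; abel
  have hvalue : R - (g + (H s + μ • s)) - -g' = e - μ • s - H (s - t) := by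
    simp only [e, t, map_sub, map_add]
    abel
  have hmono : 0 ≤ ⟪e - μ • s, s - t⟫ := by
    have hinner := inner_sub_nonneg_of_mem_subdiff hy hz
    rw [hpoint, hvalue, inner_sub_left] at hinner
    linarith [hH (s - t)]
  have hball : ⟪μ • s - e, μ • s - μ • t⟫ ≤ 0 := by
    rw [← smul_sub, inner_smul_right, ← neg_sub, inner_neg_left]
    exact mul_nonpos_of_nonneg_of_nonpos hμ (neg_nonpos.2 hmono)
  have ht : ‖t‖ ≤ ‖R‖ + ‖z - x‖ := norm_add_le _ _
  have he : ‖e‖ ≤ ‖R‖ + ‖H‖ * ‖R‖ + ‖g' - g - H (z - x)‖ :=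
    norm_add_le_of_le (norm_sub_le_of_le le_rfl (H.le_opNorm R)) le_rfl
  calc μ * ‖s‖ = ‖μ • s‖ := by rw [norm_smul, Real.norm_of_nonneg hμ]
    _ ≤ ‖μ • t‖ + ‖e‖ := norm_le_add_of_inner_sub_sub_nonpos hball
    _ = μ * ‖t‖ + ‖e‖ := by rw [norm_smul, Real.norm_of_nonneg hμ]
    _ ≤ (1 + ‖H‖ + μ) * ‖R‖ + ‖g' - g - H (z - x)‖ + μ * ‖z - x‖ := by
      linarith [mul_le_mul_of_nonneg_left ht hμ]

end NewtonStep

section SmallestEigenvalue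

variable {m : ℕ} {T S : EuclideanSpace ℝ (Fin m) →L[ℝ] EuclideanSpace ℝ (Fin m)}

theorem neg_opNorm_le_inner_of_norm_eq_one {u : EuclideanSpace ℝ (Fin m)} (hu : ‖u‖ = 1) :
    -‖T‖ ≤ ⟪T u, u⟫ := by
  have hinner := (abs_le.1 (abs_real_inner_le_norm (T u) u)).1
  rw [hu, mul_one] at hinner
  exact (neg_le_neg (T.unit_le_opNorm u hu.le)).trans hinner

theorem lambdaMin_mul_norm_sq_le (u : EuclideanSpace ℝ (Fin m)) :
    lambdaMin T * ‖u‖ ^ 2 ≤ ⟪T u, u⟫ := by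
  rcases eq_or_ne u 0 with rfl | hu
  · simp
  have hunit : ‖‖u‖⁻¹ • u‖ = 1 := norm_smul_inv_norm hu
  have hbdd : BddBelow (Set.range fun v : {v : EuclideanSpace ℝ (Fin m) // ‖v‖ = 1} ↦
      ⟪T v.1, v.1⟫) :=
    ⟨-‖T‖, Set.forall_mem_range.2 fun v ↦ neg_opNorm_le_inner_of_norm_eq_one v.2⟩
  have hle : lambdaMin T ≤ ⟪T (‖u‖⁻¹ • u), ‖u‖⁻¹ • u⟫ := ciInf_le hbdd ⟨‖u‖⁻¹ • u, hunit⟩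
  rw [map_smul, real_inner_smul_left, real_inner_smul_right] at hle
  calc lambdaMin T * ‖u‖ ^ 2 ≤ ‖u‖⁻¹ * (‖u‖⁻¹ * ⟪T u, u⟫) * ‖u‖ ^ 2 := by gcongr
    _ = ⟪T u, u⟫ := by field_simp [norm_ne_zero_iff.2 hu]

theorem inner_add_mul_max_neg_lambdaMin_nonneg {a : ℝ} (ha : 1 ≤ a)
    (u : EuclideanSpace ℝ (Fin m)) :
    0 ≤ ⟪T u, u⟫ + a * max (-lambdaMin T) 0 * ‖u‖ ^ 2 := by
  have hshift : -lambdaMin T ≤ a * max (-lambdaMin T) 0 :=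
    (le_max_left _ _).trans (le_mul_of_one_le_left (le_max_right _ _) ha)
  have hsum := mul_nonneg (neg_le_iff_add_nonneg.1 hshift) (sq_nonneg ‖u‖)
  linarith [lambdaMin_mul_norm_sq_le (T := T) u]

theorem max_neg_lambdaMin_zero_le_norm_sub (hS : ∀ u, 0 ≤ ⟪S u, u⟫) :
    max (-lambdaMin T) 0 ≤ ‖T - S‖ := by
  refine max_le (neg_le.1 ?_) (norm_nonneg _)
  rcases isEmpty_or_nonempty {u : EuclideanSpace ℝ (Fin m) // ‖u‖ = 1} with hempty | hnonempty
  · rw [lambdaMin, Real.iInf_of_isEmpty]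
    exact neg_nonpos.2 (norm_nonneg _)
  · refine le_ciInf fun u ↦ (neg_opNorm_le_inner_of_norm_eq_one u.2).trans ?_
    rw [sub_apply, inner_sub_left]
    exact sub_le_self _ (hS u)

end SmallestEigenvalue

section Calculus

theorem norm_sub_sub_fderiv_le_of_forall_mem_fderiv_le {E F : Type*} [NormedAddCommGroup E]
    [NormedSpace ℝ E] [NormedAddCommGroup F] [NormedSpace ℝ F] {g : E → F} {s : Set E} {L : ℝ}
    (hg : Differentiable ℝ g) (hs : Convex ℝ s)
    (hL : ∀ u ∈ s, ∀ v ∈ s, ‖fderiv ℝ g u - fderiv ℝ g v‖ ≤ L * ‖u - v‖) {x y : E}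
    (hx : x ∈ s) (hy : y ∈ s) :
    ‖g y - g x - fderiv ℝ g x (y - x)‖ ≤ L / 2 * ‖y - x‖ ^ 2 := by
  set d := y - x
  set h : ℝ → F := fun t ↦ g (x + t • d) - g x - t • fderiv ℝ g x d
  have hderiv (t : ℝ) : HasDerivAt h (fderiv ℝ g (x + t • d) d - fderiv ℝ g x d) t := by
    have hline : HasDerivAt (fun t : ℝ ↦ x + t • d) d t := by
      simpa using ((hasDerivAt_id t).smul_const d).const_add x
    have hscale : HasDerivAt (fun t : ℝ ↦ t • fderiv ℝ g x d) (fderiv ℝ g x d) t := by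
      simpa using (hasDerivAt_id t).smul_const (fderiv ℝ g x d)
    exact (((hg _).hasFDerivAt.comp_hasDerivAt t hline).sub_const (g x)).sub hscale
  have hbound (t : ℝ) : HasDerivAt (fun t ↦ L / 2 * ‖d‖ ^ 2 * t ^ 2) (L * ‖d‖ ^ 2 * t) t :=
    ((hasDerivAt_pow 2 t).const_mul (L / 2 * ‖d‖ ^ 2)).congr_deriv (by ring)
  have hderiv_le : ∀ t ∈ Set.Ico (0 : ℝ) 1,
      ‖fderiv ℝ g (x + t • d) d - fderiv ℝ g x d‖ ≤ L * ‖d‖ ^ 2 * t := by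
    intro t ht
    have hmem : x + t • d ∈ s := hs.add_smul_sub_mem hx hy ⟨ht.1, ht.2.le⟩
    calc ‖fderiv ℝ g (x + t • d) d - fderiv ℝ g x d‖
        ≤ L * ‖x + t • d - x‖ * ‖d‖ := by
          rw [← sub_apply]
          exact ContinuousLinearMap.le_of_opNorm_le _ (hL _ hmem _ hx) d
      _ = L * ‖d‖ ^ 2 * t := by
          rw [add_sub_cancel_left, norm_smul, Real.norm_of_nonneg ht.1]
          ring
  have hone := image_norm_le_of_norm_deriv_right_le_deriv_boundary
    (fun t _ ↦ (hderiv t).continuousAt.continuousWithinAt)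
    (fun t _ ↦ (hderiv t).hasDerivWithinAt) (by simp [h]) hbound hderiv_le
    (Set.right_mem_Icc.2 zero_le_one)
  simpa [h, d] using hone

theorem norm_fderiv_le_of_forall_mem_closedBall {E F : Type*} [NormedAddCommGroup E]
    [NormedSpace ℝ E] [NormedAddCommGroup F] [NormedSpace ℝ F] {g : E → F} {x : E} {ϱ L : ℝ}
    (hϱ : 0 < ϱ) (hL : 0 ≤ L) (hlip : ∀ y ∈ closedBall x ϱ, ‖g y - g x‖ ≤ L * ‖y - x‖) :
    ‖fderiv ℝ g x‖ ≤ L :=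
  norm_fderiv_le_of_lip' ℝ hL (Filter.mem_of_superset (closedBall_mem_nhds x hϱ) hlip)

theorem contDiff_gradient {E : Type*} [NormedAddCommGroup E] [InnerProductSpace ℝ E]
    [CompleteSpace E] {ψ : E → ℝ} (hψ : ContDiff ℝ 2 ψ) : ContDiff ℝ 1 (gradient ψ) :=
  (InnerProductSpace.toDual ℝ E).symm.toContinuousLinearEquiv.contDiff.comp
    (hψ.fderiv_right (by norm_num))

end Calculus

section AffineComposition

variable {E F : Type*} [NormedAddCommGroup E] [InnerProductSpace ℝ E] [CompleteSpace E]
  [NormedAddCommGroup F] [InnerProductSpace ℝ F] [CompleteSpace F]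
  {ψ : F → ℝ} {A : E →L[ℝ] F} {b : F} {f : E → ℝ}

theorem gradient_comp_affine (hψ : Differentiable ℝ ψ) (hf : ∀ y, f y = ψ (A y - b)) (y : E) :
    gradient f y = A.adjoint (gradient ψ (A y - b)) := by
  have hfderiv : HasFDerivAt f ((fderiv ℝ ψ (A y - b)).comp A) y := by
    rw [show f = ψ ∘ fun y ↦ A y - b from funext hf]
    exact (hψ (A y - b)).hasFDerivAt.comp y (A.hasFDerivAt.sub_const b)
  refine ext_inner_right ℝ fun w ↦ ?_
  rw [ContinuousLinearMap.adjoint_inner_left, inner_gradient_left, inner_gradient_left,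
    hfderiv.fderiv, ContinuousLinearMap.comp_apply]

theorem hasFDerivAt_gradient_comp_affine (hψ : ContDiff ℝ 2 ψ) (hf : ∀ y, f y = ψ (A y - b))
    (y : E) :
    HasFDerivAt (gradient f)
      (A.adjoint.comp ((fderiv ℝ (gradient ψ) (A y - b)).comp A)) y := by
  have hgradψ : Differentiable ℝ (gradient ψ) := (contDiff_gradient hψ).differentiable one_ne_zero
  rw [show gradient f = A.adjoint ∘ gradient ψ ∘ fun y ↦ A y - b from
    funext (gradient_comp_affine (hψ.differentiable two_ne_zero) hf)]
  exact A.adjoint.hasFDerivAt.comp y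
    ((hgradψ (A y - b)).hasFDerivAt.comp y (A.hasFDerivAt.sub_const b))

theorem norm_adjoint_comp_comp_le (A : E →L[ℝ] F) (T : F →L[ℝ] F) :
    ‖A.adjoint.comp (T.comp A)‖ ≤ ‖A‖ ^ 2 * ‖T‖ := by
  calc ‖A.adjoint.comp (T.comp A)‖ ≤ ‖A.adjoint‖ * (‖T‖ * ‖A‖) :=
        (ContinuousLinearMap.opNorm_comp_le _ _).trans
          (by gcongr; exact ContinuousLinearMap.opNorm_comp_le _ _)
    _ = ‖A‖ ^ 2 * ‖T‖ := by
        rw [LinearIsometryEquiv.norm_map]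
        ring

theorem norm_fderiv_gradient_sub_le (hψ : ContDiff ℝ 2 ψ) (hf : ∀ y, f y = ψ (A y - b))
    {Lψ : ℝ} (hLψ : 0 ≤ Lψ) {u v : E}
    (hlip : ‖fderiv ℝ (gradient ψ) (A u - b) - fderiv ℝ (gradient ψ) (A v - b)‖
      ≤ Lψ * ‖A u - A v‖) :
    ‖fderiv ℝ (gradient f) u - fderiv ℝ (gradient f) v‖ ≤ ‖A‖ ^ 3 * Lψ * ‖u - v‖ := by
  rw [(hasFDerivAt_gradient_comp_affine hψ hf u).fderiv,
    (hasFDerivAt_gradient_comp_affine hψ hf v).fderiv, ← ContinuousLinearMap.comp_sub,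
    ← ContinuousLinearMap.sub_comp]
  calc _ ≤ ‖A‖ ^ 2 * (Lψ * ‖A u - A v‖) :=
        (norm_adjoint_comp_comp_le A _).trans (by gcongr)
    _ ≤ ‖A‖ ^ 2 * (Lψ * (‖A‖ * ‖u - v‖)) := by
        rw [← map_sub]
        gcongr
        exact A.le_opNorm _
    _ = ‖A‖ ^ 3 * Lψ * ‖u - v‖ := by ring

/-- The convexified Hessian `∇²f(x) + Λ AᵀA`, written `H_k` in the algorithm; the regularization
`μ_k I` is not part of it. -/
def shiftedHessian (f : E → ℝ) (A : E →L[ℝ] F) (Λ : ℝ) (x : E) : E →L[ℝ] E :=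
  fderiv ℝ (gradient f) x + Λ • A.adjoint.comp A

theorem inner_shiftedHessian_self_nonneg (hψ : ContDiff ℝ 2 ψ) (hf : ∀ y, f y = ψ (A y - b))
    {Λ : ℝ} {x : E} (hΛ : ∀ w, 0 ≤ ⟪fderiv ℝ (gradient ψ) (A x - b) w, w⟫ + Λ * ‖w‖ ^ 2) (u : E) :
    0 ≤ ⟪shiftedHessian f A Λ x u, u⟫ := by
  have hform : ⟪shiftedHessian f A Λ x u, u⟫ =
      ⟪fderiv ℝ (gradient ψ) (A x - b) (A u), A u⟫ + Λ * ‖A u‖ ^ 2 := by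
    simp only [shiftedHessian, (hasFDerivAt_gradient_comp_affine hψ hf x).fderiv, add_apply,
      smul_apply, ContinuousLinearMap.comp_apply, inner_add_left, real_inner_smul_left,
      ContinuousLinearMap.adjoint_inner_left, real_inner_self_eq_norm_sq]
  rw [hform]
  exact hΛ (A u)

theorem norm_smul_adjoint_comp_self {Λ : ℝ} (hΛ : 0 ≤ Λ) (A : E →L[ℝ] F) :
    ‖Λ • A.adjoint.comp A‖ = Λ * ‖A‖ ^ 2 := by
  rw [norm_smul, Real.norm_of_nonneg hΛ, ContinuousLinearMap.norm_adjoint_comp_self, sq]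

theorem norm_shiftedHessian_le {Λ Lg : ℝ} (hΛ : 0 ≤ Λ) {x : E}
    (hLg : ‖fderiv ℝ (gradient f) x‖ ≤ Lg) (A : E →L[ℝ] F) :
    ‖shiftedHessian f A Λ x‖ ≤ Lg + Λ * ‖A‖ ^ 2 :=
  norm_add_le_of_le hLg (norm_smul_adjoint_comp_self hΛ A).le

theorem norm_gradient_sub_sub_shiftedHessian_le (hψ : ContDiff ℝ 2 ψ)
    (hf : ∀ y, f y = ψ (A y - b)) {s : Set E} (hs : Convex ℝ s) {Lψ Λ : ℝ} (hLψ : 0 ≤ Lψ)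
    (hlip : ∀ u ∈ s, ∀ v ∈ s,
      ‖fderiv ℝ (gradient ψ) (A u - b) - fderiv ℝ (gradient ψ) (A v - b)‖ ≤ Lψ * ‖A u - A v‖)
    (hΛ : 0 ≤ Λ) {x y : E} (hx : x ∈ s) (hy : y ∈ s) :
    ‖gradient f y - gradient f x - shiftedHessian f A Λ x (y - x)‖
      ≤ ‖A‖ ^ 3 * Lψ / 2 * ‖y - x‖ ^ 2 + Λ * ‖A‖ ^ 2 * ‖y - x‖ := by
  have htaylor := norm_sub_sub_fderiv_le_of_forall_mem_fderiv_le
    (fun y ↦ (hasFDerivAt_gradient_comp_affine hψ hf y).differentiableAt) hs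
    (fun u hu v hv ↦ norm_fderiv_gradient_sub_le hψ hf hLψ (hlip u hu v hv)) hx hy
  have hshift : ‖(Λ • A.adjoint.comp A) (y - x)‖ ≤ Λ * ‖A‖ ^ 2 * ‖y - x‖ :=
    ContinuousLinearMap.le_of_opNorm_le _ (norm_smul_adjoint_comp_self hΛ A).le _
  rw [shiftedHessian, add_apply, ← sub_sub]
  exact norm_sub_le_of_le htaylor hshift

end AffineComposition

section StrongStationarity

variable {n m : ℕ} {ψ : EuclideanSpace ℝ (Fin m) → ℝ}
  {A : EuclideanSpace ℝ (Fin n) →L[ℝ] EuclideanSpace ℝ (Fin m)} {b : EuclideanSpace ℝ (Fin m)}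
  {f φ : EuclideanSpace ℝ (Fin n) → ℝ}

/-- The set `X*` of strongly stationary points of `f + φ`, where `f = ψ(A · - b)`: stationary points
at which `∇²ψ(A · - b)` is positive semidefinite. -/
def strongStationarySet (f φ : EuclideanSpace ℝ (Fin n) → ℝ) (ψ : EuclideanSpace ℝ (Fin m) → ℝ)
    (A : EuclideanSpace ℝ (Fin n) →L[ℝ] EuclideanSpace ℝ (Fin m))
    (b : EuclideanSpace ℝ (Fin m)) : Set (EuclideanSpace ℝ (Fin n)) :=
  {y | -gradient f y ∈ subdiff φ y ∧ ∀ u, 0 ≤ ⟪fderiv ℝ (gradient ψ) (A y - b) u, u⟫}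

theorem isClosed_strongStationarySet (hψ : ContDiff ℝ 2 ψ) (hφ : ConvexOn ℝ Set.univ φ)
    (hf : ∀ y, f y = ψ (A y - b)) : IsClosed (strongStationarySet f φ ψ A b) := by
  have hgrad : Continuous (gradient f) := continuous_iff_continuousAt.2 fun y ↦
    (hasFDerivAt_gradient_comp_affine hψ hf y).continuousAt
  have hhess : Continuous (fderiv ℝ (gradient ψ)) :=
    (contDiff_gradient hψ).continuous_fderiv one_ne_zero
  refine (isClosed_setOf_mem_subdiff hφ.locallyLipschitz.continuous hgrad.neg).inter ?_
  change IsClosed {y | ∀ u, 0 ≤ ⟪fderiv ℝ (gradient ψ) (A y - b) u, u⟫}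
  rw [Set.ofPred_forall]
  exact isClosed_iInter fun u ↦ isClosed_le continuous_const (by fun_prop)

theorem norm_resid_le_mul_norm_sub (hφ : ConvexOn ℝ Set.univ φ)
    {x z : EuclideanSpace ℝ (Fin n)} (hz : -gradient f z ∈ subdiff φ z) {Lg : ℝ}
    (hLg : ‖gradient f x - gradient f z‖ ≤ Lg * ‖x - z‖) :
    ‖resid f φ x‖ ≤ (2 + Lg) * ‖x - z‖ := by
  have hle := norm_proxResid_sub_proxResid_le hφ x z (gradient f x) (gradient f z)
  rw [proxResid_eq_zero hφ hz, sub_zero] at hle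
  exact hle.trans (by linarith)

end StrongStationarity

section RateArithmetic

theorem nonneg_of_mul_rpow_le_of_le_mul_rpow {νmin νbar μ r δ : ℝ} (hνmin : 0 ≤ νmin) (hr : 0 < r)
    (hμ_ge : νmin * r ^ δ ≤ μ) (hμ_le : μ ≤ νbar * r ^ δ) : 0 ≤ μ ∧ 0 ≤ νbar := by
  have hpow : 0 < r ^ δ := Real.rpow_pos_of_pos hr δ
  have hμ : 0 ≤ μ := (mul_nonneg hνmin hpow.le).trans hμ_ge
  exact ⟨hμ, nonneg_of_mul_nonneg_left (hμ.trans hμ_le) hpow⟩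

theorem le_mul_of_mul_le_add {μ s M ρ C D νmin δ θ r τ ℓ β : ℝ} (hνmin : 0 < νmin) (hβ : 0 < β)
    (hθ : 0 ≤ θ) (hM : 0 ≤ M) (hC : 0 ≤ C) (hτ : δ ≤ τ) (hr : 0 < r) (hℓ : 0 ≤ ℓ) (hD₀ : 0 ≤ D)
    (hD₁ : D ≤ 1) (hrD : r ≤ ℓ * D) (hβD : β * D ≤ r ^ δ) (hμ : νmin * r ^ δ ≤ μ)
    (hρ : ρ ≤ θ * r ^ (1 + τ)) (hs : μ * s ≤ M * ρ + C * D ^ 2 + μ * D) :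
    s ≤ (νmin⁻¹ * θ * ℓ ^ (1 + τ - δ) * M + C / (νmin * β) + 1) * D := by
  suffices hgap : s - D ≤ (νmin⁻¹ * θ * ℓ ^ (1 + τ - δ) * M + C / (νmin * β)) * D by linarith
  rcases le_total s D with hsD | hDs
  · exact (sub_nonpos.2 hsD).trans (by positivity)
  have hpow : r ^ (1 + τ) ≤ r ^ δ * (ℓ ^ (1 + τ - δ) * D) := by
    calc r ^ (1 + τ) = r ^ δ * r ^ (1 + τ - δ) := by rw [← Real.rpow_add hr, add_sub_cancel]
      _ ≤ r ^ δ * (ℓ * D) ^ (1 + τ - δ) := by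
          gcongr
          linarith
      _ ≤ r ^ δ * (ℓ ^ (1 + τ - δ) * D) := by
          rw [Real.mul_rpow hℓ hD₀]
          gcongr
          exact Real.rpow_le_self_of_le_one hD₀ hD₁ (by linarith)
  have hquad : D ^ 2 ≤ r ^ δ * (D / β) := by
    calc D ^ 2 = β * D * (D / β) := by field_simp
      _ ≤ r ^ δ * (D / β) := by gcongr
  refine le_of_mul_le_mul_left ?_ (mul_pos hνmin (Real.rpow_pos_of_pos hr δ))
  calc νmin * r ^ δ * (s - D) ≤ μ * (s - D) := by gcongr
    _ ≤ M * (θ * (r ^ δ * (ℓ ^ (1 + τ - δ) * D))) + C * (r ^ δ * (D / β)) := by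
        have hMρ : M * ρ ≤ M * (θ * (r ^ δ * (ℓ ^ (1 + τ - δ) * D))) := by
          gcongr
          exact hρ.trans (by gcongr)
        linarith [mul_le_mul_of_nonneg_left hquad hC]
    _ = νmin * r ^ δ * ((νmin⁻¹ * θ * ℓ ^ (1 + τ - δ) * M + C / (νmin * β)) * D) := by
        field_simp

theorem add_le_mul_rpow_min {θ P Q β q δ τ r D : ℝ} (hθ : 0 ≤ θ) (hP : 0 ≤ P) (hQ : 0 ≤ Q)
    (hβ : 0 < β) (hδq : δ ≤ q) (hr₀ : 0 < r) (hr₁ : r ≤ 1) (hD : 0 ≤ D) (hβD : β * D ≤ r ^ q) :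
    θ * r ^ (1 + τ) + P * D ^ 2 + Q * r ^ δ * D
      ≤ (P / β ^ 2 + Q / β + θ) * r ^ min (δ + q) (1 + τ) := by
  set e := min (δ + q) (1 + τ)
  have hDle : D ≤ r ^ q / β := (le_div_iff₀' hβ).2 hβD
  have hquad : D ^ 2 ≤ r ^ e / β ^ 2 := by
    calc D ^ 2 ≤ (r ^ q / β) ^ 2 := by gcongr
      _ = r ^ (q + q) / β ^ 2 := by rw [div_pow, sq, Real.rpow_add hr₀]
      _ ≤ r ^ e / β ^ 2 := by
          gcongr ?_ / _
          exact Real.rpow_le_rpow_of_exponent_ge hr₀ hr₁ ((min_le_left _ _).trans (by linarith))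
  have hmixed : r ^ δ * D ≤ r ^ e / β := by
    calc r ^ δ * D ≤ r ^ δ * (r ^ q / β) := by gcongr
      _ = r ^ (δ + q) / β := by rw [Real.rpow_add hr₀, mul_div_assoc]
      _ ≤ r ^ e / β := by
          gcongr ?_ / _
          exact Real.rpow_le_rpow_of_exponent_ge hr₀ hr₁ (min_le_left _ _)
  have hinexact : r ^ (1 + τ) ≤ r ^ e :=
    Real.rpow_le_rpow_of_exponent_ge hr₀ hr₁ (min_le_right _ _)
  calc θ * r ^ (1 + τ) + P * D ^ 2 + Q * r ^ δ * D
      ≤ θ * r ^ e + P * (r ^ e / β ^ 2) + Q * (r ^ e / β) := by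
        rw [mul_assoc Q]
        gcongr
    _ = (P / β ^ 2 + Q / β + θ) * r ^ e := by ring

theorem add_le_mul_rpow_one_add {θ P Q δ τ r D ℓ : ℝ} (hθ : 0 ≤ θ) (hP : 0 ≤ P) (hQ : 0 ≤ Q)
    (hδ₀ : 0 ≤ δ) (hδ₁ : δ ≤ 1) (hτ : δ ≤ τ) (hr : 0 ≤ r) (hℓ : 0 ≤ ℓ) (hD₀ : 0 ≤ D) (hD₁ : D ≤ 1)
    (hrD : r ≤ ℓ * D) :
    θ * r ^ (1 + τ) + P * D ^ 2 + Q * r ^ δ * D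
      ≤ (P + Q * ℓ ^ δ + θ * ℓ ^ (1 + τ)) * D ^ (1 + δ) := by
  have hquad : D ^ 2 ≤ D ^ (1 + δ) := by
    rw [← Real.rpow_two]
    exact Real.rpow_le_rpow_of_exponent_ge' hD₀ hD₁ (by linarith) (by linarith)
  have hmixed : r ^ δ * D ≤ ℓ ^ δ * D ^ (1 + δ) := by
    calc r ^ δ * D ≤ (ℓ * D) ^ δ * D := by gcongr
      _ = ℓ ^ δ * D ^ (1 + δ) := by
          rw [Real.mul_rpow hℓ hD₀, Real.rpow_one_add' hD₀ (by linarith)]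
          ring
  have hinexact : r ^ (1 + τ) ≤ ℓ ^ (1 + τ) * D ^ (1 + δ) := by
    calc r ^ (1 + τ) ≤ (ℓ * D) ^ (1 + τ) := by
          gcongr
          linarith
      _ = ℓ ^ (1 + τ) * D ^ (1 + τ) := Real.mul_rpow hℓ hD₀
      _ ≤ ℓ ^ (1 + τ) * D ^ (1 + δ) := by
          gcongr ?_ * ?_
          exact Real.rpow_le_rpow_of_exponent_ge' hD₀ hD₁ (by linarith) (by linarith)
  calc θ * r ^ (1 + τ) + P * D ^ 2 + Q * r ^ δ * D
      ≤ θ * (ℓ ^ (1 + τ) * D ^ (1 + δ)) + P * D ^ (1 + δ) + Q * (ℓ ^ δ * D ^ (1 + δ)) := by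
        rw [mul_assoc Q]
        gcongr
    _ = (P + Q * ℓ ^ δ + θ * ℓ ^ (1 + τ)) * D ^ (1 + δ) := by ring

theorem le_mul_rpow_of_mul_le_rpow {β q D' ρ S D e : ℝ} (hβ : 0 < β) (hq : 0 ≤ q) (hρ : 0 ≤ ρ)
    (hS : 0 ≤ S) (hD : 0 ≤ D) (hbound : β * D' ≤ ρ ^ q) (hle : ρ ≤ S * D ^ e) :
    D' ≤ 1 / β * S ^ q * D ^ (e * q) := by
  have hpow : β * D' ≤ S ^ q * D ^ (e * q) := by
    calc β * D' ≤ (S * D ^ e) ^ q := hbound.trans (by gcongr)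
      _ = S ^ q * D ^ (e * q) := by
          rw [Real.mul_rpow hS (Real.rpow_nonneg hD e), Real.rpow_mul hD]
  calc D' ≤ S ^ q * D ^ (e * q) / β := (le_div_iff₀' hβ).2 hpow
    _ = 1 / β * S ^ q * D ^ (e * q) := by ring

end RateArithmetic

section RegularizationSequence

variable {σ₁ σ₂ η νmin νbar : ℝ} {r ν rbar : ℕ → ℝ} {unsucc : ℕ → Prop}

theorem le_regularization (hσ₂ : 1 ≤ σ₂) (hνmin : 0 ≤ νmin) (hν₀ : νmin ≤ ν 0)
    (hνbar : νmin ≤ νbar) (hunsucc : ∀ k, unsucc k → ν (k + 1) = σ₂ * ν k)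
    (hsucc : ∀ k, ¬unsucc k →
      ν (k + 1) = min (ν k) νbar ∨ ν (k + 1) = min (max (σ₁ * ν k) νmin) νbar) (k : ℕ) :
    νmin ≤ ν k := by
  induction k with
  | zero => exact hν₀
  | succ k ih =>
    by_cases hk : unsucc k
    · rw [hunsucc k hk]
      exact ih.trans (le_mul_of_one_le_left (hνmin.trans ih) hσ₂)
    · rcases hsucc k hk with hkeep | hdecrease
      · exact hkeep ▸ le_min ih hνbar
      · exact hdecrease ▸ le_min (le_max_right _ _) hνbar

theorem mul_referenceResid_lt (hη : η < 1) (hr : ∀ k, 0 < r k) (hrbar₀ : rbar 0 = r 0)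
    (hdrop : ∀ k, r (k + 1) ≤ η * rbar k → rbar (k + 1) = r (k + 1))
    (hkeep : ∀ k, ¬r (k + 1) ≤ η * rbar k → rbar (k + 1) = rbar k) (k : ℕ) :
    η * rbar k < r k := by
  have hself (k : ℕ) : η * r k < r k := mul_lt_of_lt_one_left (hr k) hη
  cases k with
  | zero => exact hrbar₀ ▸ hself 0
  | succ k =>
    by_cases hk : r (k + 1) ≤ η * rbar k
    · exact hdrop k hk ▸ hself (k + 1)
    · exact hkeep k hk ▸ not_le.1 hk

theorem referenceResid_eq_and_regularization_le (hη : η < 1) (hr : ∀ k, 0 < r k)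
    (hrbar₀ : rbar 0 = r 0) (hν₀ : ν 0 ≤ νbar)
    (hdrop : ∀ k, r (k + 1) ≤ η * rbar k → rbar (k + 1) = r (k + 1))
    (hkeep : ∀ k, ¬r (k + 1) ≤ η * rbar k → rbar (k + 1) = rbar k)
    (hstall : ∀ k, unsucc k → r (k + 1) = r k) (hsucc : ∀ k, ¬unsucc k → ν (k + 1) ≤ νbar)
    {k : ℕ} (hk : k ∈ ({0} ∪ {k | 1 ≤ k ∧ r k ≤ η * rbar (k - 1)} : Set ℕ)) :
    rbar k = r k ∧ ν k ≤ νbar := by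
  rcases hk with rfl | ⟨hpos, hle⟩
  · exact ⟨hrbar₀, hν₀⟩
  obtain ⟨j, rfl⟩ := Nat.exists_eq_add_of_le' hpos
  rw [Nat.add_sub_cancel] at hle
  have hj : ¬unsucc j := fun hj ↦
    (mul_referenceResid_lt hη hr hrbar₀ hdrop hkeep j).not_ge (hstall j hj ▸ hle)
  exact ⟨hdrop j hle, hsucc j hj⟩

theorem mul_rpow_le_and_le_mul_rpow_of_regularization {μ : ℕ → ℝ} {δ : ℝ} (hη : η < 1)
    (hσ₂ : 1 ≤ σ₂) (hνmin : 0 ≤ νmin) (hν₀ : ν 0 ∈ Set.Icc νmin νbar) (hr : ∀ k, 0 < r k)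
    (hrbar₀ : rbar 0 = r 0)
    (hμ : ∀ k, μ k = ν k * rbar k ^ δ)
    (hunsucc : ∀ k, unsucc k → r (k + 1) = r k ∧ ν (k + 1) = σ₂ * ν k)
    (hsucc : ∀ k, ¬unsucc k →
      ν (k + 1) = min (ν k) νbar ∨ ν (k + 1) = min (max (σ₁ * ν k) νmin) νbar)
    (hdrop : ∀ k, r (k + 1) ≤ η * rbar k → rbar (k + 1) = r (k + 1))
    (hkeep : ∀ k, ¬r (k + 1) ≤ η * rbar k → rbar (k + 1) = rbar k)
    {k : ℕ} (hk : k ∈ ({0} ∪ {k | 1 ≤ k ∧ r k ≤ η * rbar (k - 1)} : Set ℕ)) :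
    νmin * r k ^ δ ≤ μ k ∧ μ k ≤ νbar * r k ^ δ := by
  have hν_ge : νmin ≤ ν k := le_regularization hσ₂ hνmin hν₀.1 (hν₀.1.trans hν₀.2)
    (fun j hj ↦ (hunsucc j hj).2) hsucc k
  obtain ⟨hrbar, hν_le⟩ := referenceResid_eq_and_regularization_le hη hr hrbar₀ hν₀.2 hdrop hkeep
    (fun j hj ↦ (hunsucc j hj).1)
    (fun j hj ↦ (hsucc j hj).elim (· ▸ min_le_right _ _) (· ▸ min_le_right _ _)) hk
  have hpow : 0 ≤ r k ^ δ := Real.rpow_nonneg (hr k).le δ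
  rw [hμ, hrbar]
  exact ⟨mul_le_mul_of_nonneg_right hν_ge hpow, mul_le_mul_of_nonneg_right hν_le hpow⟩

end RegularizationSequence

theorem closedBall_mul_norm_sub_subset {E : Type*} [SeminormedAddCommGroup E] {x z : E} {c ε : ℝ}
    (hc : 0 < 1 + c) (hx : ‖x - z‖ ≤ ε / (1 + c)) :
    closedBall x (c * ‖x - z‖) ⊆ closedBall z ε := by
  refine closedBall_subset_closedBall' ?_
  rw [dist_eq_norm]
  linarith [(le_div_iff₀' hc).1 hx]

section LocalConvergence

variable {n m : ℕ} {ψ : EuclideanSpace ℝ (Fin m) → ℝ}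
  {A : EuclideanSpace ℝ (Fin n) →L[ℝ] EuclideanSpace ℝ (Fin m)} {b : EuclideanSpace ℝ (Fin m)}
  {f φ : EuclideanSpace ℝ (Fin n) → ℝ}

theorem exists_mem_strongStationarySet_norm_sub_eq_infDist (hψ : ContDiff ℝ 2 ψ)
    (hφ : ConvexOn ℝ Set.univ φ) (hf : ∀ y, f y = ψ (A y - b))
    {xstar x : EuclideanSpace ℝ (Fin n)} (hxstar : xstar ∈ strongStationarySet f φ ψ A b) :
    ∃ z ∈ strongStationarySet f φ ψ A b,
      ‖x - z‖ = infDist x (strongStationarySet f φ ψ A b) ∧ ‖x - z‖ ≤ ‖x - xstar‖ := by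
  obtain ⟨z, hz, hdist⟩ :=
    (isClosed_strongStationarySet hψ hφ hf).exists_infDist_eq_dist ⟨xstar, hxstar⟩ x
  simp only [← dist_eq_norm]
  exact ⟨z, hz, hdist.symm, hdist ▸ infDist_le_dist_of_mem hxstar⟩

theorem norm_resid_le_one_of_norm_sub_le (hφ : ConvexOn ℝ Set.univ φ)
    {x xstar : EuclideanSpace ℝ (Fin n)} (hxstar : -gradient f xstar ∈ subdiff φ xstar) {Lg : ℝ}
    (hLg : 0 ≤ Lg) (hlip : ‖gradient f x - gradient f xstar‖ ≤ Lg * ‖x - xstar‖)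
    (hx : ‖x - xstar‖ ≤ 1 / (2 + Lg)) : ‖resid f φ x‖ ≤ 1 :=
  (norm_resid_le_mul_norm_sub hφ hxstar hlip).trans ((le_div_iff₀' (by linarith)).1 hx)

theorem mul_norm_sq_le_of_mem_strongStationarySet {a Lψ Λ : ℝ} (ha : 0 ≤ a) (hLψ : 0 ≤ Lψ)
    {x z : EuclideanSpace ℝ (Fin n)}
    (hΛ : Λ = a * max (-lambdaMin (fderiv ℝ (gradient ψ) (A x - b))) 0)
    (hz : z ∈ strongStationarySet f φ ψ A b)
    (hlip : ‖fderiv ℝ (gradient ψ) (A x - b) - fderiv ℝ (gradient ψ) (A z - b)‖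
      ≤ Lψ * ‖A x - A z‖) :
    Λ * ‖A‖ ^ 2 ≤ a * (‖A‖ ^ 3 * Lψ) * ‖x - z‖ := by
  have hmax : max (-lambdaMin (fderiv ℝ (gradient ψ) (A x - b))) 0 ≤ Lψ * (‖A‖ * ‖x - z‖) := by
    refine (max_neg_lambdaMin_zero_le_norm_sub hz.2).trans (hlip.trans ?_)
    rw [← map_sub]
    gcongr
    exact A.le_opNorm _
  calc Λ * ‖A‖ ^ 2 ≤ a * (Lψ * (‖A‖ * ‖x - z‖)) * ‖A‖ ^ 2 := by
        rw [hΛ]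
        gcongr
    _ = a * (‖A‖ ^ 3 * Lψ) * ‖x - z‖ := by ring

/-- The residual `R_k(y)` of the regularized subproblem at `x`, with Hessian
`G_k = shiftedHessian f A Λ x + μ I`. -/
def subproblemResid (f φ : EuclideanSpace ℝ (Fin n) → ℝ)
    (A : EuclideanSpace ℝ (Fin n) →L[ℝ] EuclideanSpace ℝ (Fin m)) (Λ μ : ℝ)
    (x y : EuclideanSpace ℝ (Fin n)) : EuclideanSpace ℝ (Fin n) :=
  proxResid φ y (gradient f x + (shiftedHessian f A Λ x (y - x) + μ • (y - x)))

variable {s : Set (EuclideanSpace ℝ (Fin n))} {Lψ Λ μ : ℝ} {x y z : EuclideanSpace ℝ (Fin n)}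

theorem mul_norm_step_le (hψ : ContDiff ℝ 2 ψ) (hφ : ConvexOn ℝ Set.univ φ)
    (hf : ∀ y, f y = ψ (A y - b)) (hs : Convex ℝ s) (hLψ : 0 ≤ Lψ)
    (hlip : ∀ u ∈ s, ∀ v ∈ s,
      ‖fderiv ℝ (gradient ψ) (A u - b) - fderiv ℝ (gradient ψ) (A v - b)‖ ≤ Lψ * ‖A u - A v‖)
    (hΛ : 0 ≤ Λ) (hpsd : ∀ w, 0 ≤ ⟪fderiv ℝ (gradient ψ) (A x - b) w, w⟫ + Λ * ‖w‖ ^ 2)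
    (hμ : 0 ≤ μ) (hx : x ∈ s) (hzs : z ∈ s) (hz : -gradient f z ∈ subdiff φ z) {Lg : ℝ}
    (hLg : ‖fderiv ℝ (gradient f) x‖ ≤ Lg) :
    μ * ‖y - x‖ ≤ (1 + Lg + Λ * ‖A‖ ^ 2 + μ) * ‖subproblemResid f φ A Λ μ x y‖
      + (‖A‖ ^ 3 * Lψ / 2 * ‖x - z‖ ^ 2 + Λ * ‖A‖ ^ 2 * ‖x - z‖) + μ * ‖x - z‖ := by
  have hstep : μ * ‖y - x‖ ≤ (1 + ‖shiftedHessian f A Λ x‖ + μ) * ‖subproblemResid f φ A Λ μ x y‖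
      + ‖gradient f z - gradient f x - shiftedHessian f A Λ x (z - x)‖ + μ * ‖z - x‖ :=
    mul_norm_sub_le_of_mem_subdiff (inner_shiftedHessian_self_nonneg hψ hf hpsd) hμ
      (proxResid_sub_mem_subdiff hφ y _) hz
  have hmodel := norm_gradient_sub_sub_shiftedHessian_le hψ hf hs hLψ hlip hΛ hx hzs
  have hH : ‖shiftedHessian f A Λ x‖ ≤ Lg + Λ * ‖A‖ ^ 2 := norm_shiftedHessian_le hΛ hLg A
  rw [norm_sub_rev z x] at hstep hmodel
  refine hstep.trans (add_le_add (add_le_add ?_ hmodel) le_rfl)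
  exact mul_le_mul_of_nonneg_right (by linarith) (norm_nonneg _)

theorem norm_resid_le_norm_subproblemResid_add (hψ : ContDiff ℝ 2 ψ) (hφ : ConvexOn ℝ Set.univ φ)
    (hf : ∀ y, f y = ψ (A y - b)) (hs : Convex ℝ s) (hLψ : 0 ≤ Lψ)
    (hlip : ∀ u ∈ s, ∀ v ∈ s,
      ‖fderiv ℝ (gradient ψ) (A u - b) - fderiv ℝ (gradient ψ) (A v - b)‖ ≤ Lψ * ‖A u - A v‖)
    (hΛ : 0 ≤ Λ) (hμ : 0 ≤ μ) (hx : x ∈ s) (hy : y ∈ s) :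
    ‖resid f φ y‖ ≤ ‖subproblemResid f φ A Λ μ x y‖
      + (‖A‖ ^ 3 * Lψ / 2 * ‖y - x‖ ^ 2 + Λ * ‖A‖ ^ 2 * ‖y - x‖) + μ * ‖y - x‖ := by
  set H := shiftedHessian f A Λ x
  have hmodel : ‖gradient f y - (gradient f x + (H (y - x) + μ • (y - x)))‖
      ≤ ‖A‖ ^ 3 * Lψ / 2 * ‖y - x‖ ^ 2 + Λ * ‖A‖ ^ 2 * ‖y - x‖ + μ * ‖y - x‖ := by
    rw [← sub_sub, ← sub_sub]
    refine norm_sub_le_of_le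
      (norm_gradient_sub_sub_shiftedHessian_le hψ hf hs hLψ hlip hΛ hx hy) ?_
    rw [norm_smul, Real.norm_of_nonneg hμ]
  have hdiff : ‖resid f φ y - subproblemResid f φ A Λ μ x y‖ ≤
      2 * ‖y - y‖ + ‖gradient f y - (gradient f x + (H (y - x) + μ • (y - x)))‖ :=
    norm_proxResid_sub_proxResid_le hφ y y _ _
  rw [sub_self y, norm_zero, mul_zero, zero_add] at hdiff
  linarith [norm_le_norm_add_norm_sub' (resid f φ y) (subproblemResid f φ A Λ μ x y)]

theorem norm_step_le_mul_norm_sub (hψ : ContDiff ℝ 2 ψ) (hφ : ConvexOn ℝ Set.univ φ)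
    (hf : ∀ y, f y = ψ (A y - b)) (hs : Convex ℝ s) (hLψ : 0 ≤ Lψ)
    (hlip : ∀ u ∈ s, ∀ v ∈ s,
      ‖fderiv ℝ (gradient ψ) (A u - b) - fderiv ℝ (gradient ψ) (A v - b)‖ ≤ Lψ * ‖A u - A v‖)
    (hΛ : 0 ≤ Λ) (hpsd : ∀ w, 0 ≤ ⟪fderiv ℝ (gradient ψ) (A x - b) w, w⟫ + Λ * ‖w‖ ^ 2)
    (hx : x ∈ s) (hzs : z ∈ s) (hz : -gradient f z ∈ subdiff φ z) {Lg : ℝ}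
    (hHess : ‖fderiv ℝ (gradient f) x‖ ≤ Lg)
    {a L νmin νbar δ τ θ β : ℝ} (hL : L = ‖A‖ ^ 3 * Lψ) (ha : 0 ≤ a) (hνmin : 0 < νmin)
    (hδ₀ : 0 ≤ δ) (hτ : δ ≤ τ) (hθ : 0 ≤ θ) (hβ : 0 < β) (hr : 0 < ‖resid f φ x‖)
    (hrz : ‖resid f φ x‖ ≤ (2 + Lg) * ‖x - z‖) (hxz : ‖x - z‖ ≤ 1)
    (hβδ : β * ‖x - z‖ ≤ ‖resid f φ x‖ ^ δ) (hΛA : Λ * ‖A‖ ^ 2 ≤ a * L * ‖x - z‖)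
    (hμ_ge : νmin * ‖resid f φ x‖ ^ δ ≤ μ) (hμ_le : μ ≤ νbar * ‖resid f φ x‖ ^ δ)
    (hinex : ‖subproblemResid f φ A Λ μ x y‖ ≤ θ * ‖resid f φ x‖ ^ (1 + τ)) :
    ‖y - x‖ ≤ (νmin⁻¹ * θ * (2 + Lg) ^ (1 + τ - δ) * (1 + Lg + a * L + νbar * (2 + Lg) ^ δ)
      + (L + 2 * a * L) / (2 * νmin * β) + 1) * ‖x - z‖ := by
  have hL₀ : 0 ≤ L := by rw [hL]; positivity
  have hLg : 0 ≤ Lg := (norm_nonneg _).trans hHess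
  obtain ⟨hμ, hνbar⟩ := nonneg_of_mul_rpow_le_of_le_mul_rpow hνmin.le hr hμ_ge hμ_le
  have hμ_const : μ ≤ νbar * (2 + Lg) ^ δ := by
    refine hμ_le.trans ?_
    gcongr
    exact hrz.trans (mul_le_of_le_one_right (by linarith) hxz)
  have hΛ_const : Λ * ‖A‖ ^ 2 ≤ a * L :=
    hΛA.trans (mul_le_of_le_one_right (by positivity) hxz)
  have hstep : μ * ‖y - x‖ ≤ (1 + Lg + a * L + νbar * (2 + Lg) ^ δ) *
      ‖subproblemResid f φ A Λ μ x y‖ + (L / 2 + a * L) * ‖x - z‖ ^ 2 + μ * ‖x - z‖ := by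
    calc _ ≤ _ := mul_norm_step_le hψ hφ hf hs hLψ hlip hΛ hpsd hμ hx hzs hz hHess
      _ ≤ (1 + Lg + a * L + νbar * (2 + Lg) ^ δ) * ‖subproblemResid f φ A Λ μ x y‖
          + (L / 2 * ‖x - z‖ ^ 2 + a * L * ‖x - z‖ * ‖x - z‖) + μ * ‖x - z‖ := by
        rw [← hL]
        gcongr
      _ = _ := by ring
  have hconst : (L + 2 * a * L) / (2 * νmin * β) = (L / 2 + a * L) / (νmin * β) := by
    field_simp
  rw [hconst]
  exact le_mul_of_mul_le_add hνmin hβ hθ (by positivity) (by positivity) hτ hr (by linarith)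
    (norm_nonneg _) hxz hrz hβδ hμ_ge hinex hstep

theorem norm_resid_step_le (hψ : ContDiff ℝ 2 ψ) (hφ : ConvexOn ℝ Set.univ φ)
    (hf : ∀ y, f y = ψ (A y - b)) (hs : Convex ℝ s) (hLψ : 0 ≤ Lψ)
    (hlip : ∀ u ∈ s, ∀ v ∈ s,
      ‖fderiv ℝ (gradient ψ) (A u - b) - fderiv ℝ (gradient ψ) (A v - b)‖ ≤ Lψ * ‖A u - A v‖)
    (hΛ : 0 ≤ Λ) (hμ : 0 ≤ μ) (hx : x ∈ s) (hy : y ∈ s) {a L νbar δ τ θ c : ℝ}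
    (hL : L = ‖A‖ ^ 3 * Lψ) (hΛA : Λ * ‖A‖ ^ 2 ≤ a * L * ‖x - z‖)
    (hμ_le : μ ≤ νbar * ‖resid f φ x‖ ^ δ)
    (hinex : ‖subproblemResid f φ A Λ μ x y‖ ≤ θ * ‖resid f φ x‖ ^ (1 + τ))
    (hstep : ‖y - x‖ ≤ c * ‖x - z‖) :
    ‖resid f φ y‖ ≤ θ * ‖resid f φ x‖ ^ (1 + τ) + (c ^ 2 * L / 2 + a * c * L) * ‖x - z‖ ^ 2
      + c * νbar * ‖resid f φ x‖ ^ δ * ‖x - z‖ := by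
  have hL₀ : 0 ≤ L := by rw [hL]; positivity
  have hΛA₀ : 0 ≤ a * L * ‖x - z‖ := (by positivity : 0 ≤ Λ * ‖A‖ ^ 2).trans hΛA
  have hμ_le₀ : 0 ≤ νbar * ‖resid f φ x‖ ^ δ := hμ.trans hμ_le
  calc ‖resid f φ y‖ ≤ _ :=
        norm_resid_le_norm_subproblemResid_add hψ hφ hf hs hLψ hlip hΛ hμ hx hy
    _ ≤ θ * ‖resid f φ x‖ ^ (1 + τ)
          + (L / 2 * (c * ‖x - z‖) ^ 2 + a * L * ‖x - z‖ * (c * ‖x - z‖))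
          + νbar * ‖resid f φ x‖ ^ δ * (c * ‖x - z‖) := by
        rw [← hL]
        gcongr
    _ = _ := by ring

end LocalConvergence

theorem stmt_17_general {n m : ℕ} {ψ : EuclideanSpace ℝ (Fin m) → ℝ}
    {A : EuclideanSpace ℝ (Fin n) →L[ℝ] EuclideanSpace ℝ (Fin m)} {b : EuclideanSpace ℝ (Fin m)}
    {f φ : EuclideanSpace ℝ (Fin n) → ℝ} (hψ : ContDiff ℝ 2 ψ) (hφ : ConvexOn ℝ Set.univ φ)
    (hf : ∀ y, f y = ψ (A y - b))
    {a νmin νbar δ τ θ : ℝ} (ha : 1 ≤ a) (hνmin : 0 < νmin) (hδ₀ : 0 ≤ δ) (hδ₁ : δ ≤ 1)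
    (hτ : δ ≤ τ) (hθ : 0 ≤ θ)
    {x xhat : EuclideanSpace ℝ (Fin n)} {Λ μ : ℝ}
    (hΛ : Λ = a * max (-lambdaMin (fderiv ℝ (gradient ψ) (A x - b))) 0)
    (hμ_ge : νmin * ‖resid f φ x‖ ^ δ ≤ μ) (hμ_le : μ ≤ νbar * ‖resid f φ x‖ ^ δ)
    (hinex : ‖subproblemResid f φ A Λ μ x xhat‖ ≤ θ * ‖resid f φ x‖ ^ (1 + τ))
    (hx_ne : resid f φ x ≠ 0)
    {xstar : EuclideanSpace ℝ (Fin n)} (hxstar : xstar ∈ strongStationarySet f φ ψ A b)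
    {Lψ Lg L β q c : ℝ} (hLψ : 0 ≤ Lψ) (hLg : 0 ≤ Lg) (hL : L = ‖A‖ ^ 3 * Lψ)
    (hlipψ : ∀ u ∈ closedBall x (c * ‖x - xstar‖), ∀ v ∈ closedBall x (c * ‖x - xstar‖),
      ‖fderiv ℝ (gradient ψ) (A u - b) - fderiv ℝ (gradient ψ) (A v - b)‖ ≤ Lψ * ‖A u - A v‖)
    (hlipg : ∀ u ∈ closedBall x (c * ‖x - xstar‖), ∀ v ∈ closedBall x (c * ‖x - xstar‖),
      ‖gradient f u - gradient f v‖ ≤ Lg * ‖u - v‖)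
    (hβ : 0 < β) (hδq : δ ≤ q)
    (herrbd : ∀ y ∈ closedBall x (c * ‖x - xstar‖),
      β * infDist y (strongStationarySet f φ ψ A b) ≤ ‖resid f φ y‖ ^ q)
    (hc : νmin⁻¹ * θ * (2 + Lg) ^ (1 + τ - δ) * (1 + Lg + a * L + νbar * (2 + Lg) ^ δ)
      + (L + 2 * a * L) / (2 * νmin * β) + 1 ≤ c)
    (hx : ‖x - xstar‖ ≤ 1 / (2 + Lg)) :
    ‖resid f φ xhat‖ ≤ ((c ^ 2 * L / 2 + a * c * L) / β ^ 2 + c * νbar / β + θ) *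
        ‖resid f φ x‖ ^ min (δ + q) (1 + τ) ∧
      infDist xhat (strongStationarySet f φ ψ A b) ≤ 1 / β *
        (c ^ 2 * L / 2 + a * c * L + c * νbar * (2 + Lg) ^ δ + θ * (2 + Lg) ^ (1 + τ)) ^ q *
        infDist x (strongStationarySet f φ ψ A b) ^ ((1 + δ) * q) := by
  have hr : 0 < ‖resid f φ x‖ := norm_pos_iff.2 hx_ne
  have hL₀ : 0 ≤ L := by rw [hL]; positivity
  have hΛ₀ : 0 ≤ Λ := by rw [hΛ]; positivity
  obtain ⟨hμ, hνbar⟩ := nonneg_of_mul_rpow_le_of_le_mul_rpow hνmin.le hr hμ_ge hμ_le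
  have hc₁ : 1 ≤ c := le_trans (le_add_of_nonneg_left (by positivity)) hc
  set s := closedBall x (c * ‖x - xstar‖)
  have hs : Convex ℝ s := convex_closedBall _ _
  have hx_pos : 0 < ‖x - xstar‖ :=
    norm_sub_pos_iff.2 fun heq ↦ hx_ne (heq ▸ proxResid_eq_zero hφ hxstar.1)
  have hxs : x ∈ s := mem_closedBall_self (by positivity)
  have hmem {y} (hy : ‖x - y‖ ≤ ‖x - xstar‖) : y ∈ s := by
    rw [mem_closedBall_iff_norm']
    exact hy.trans (le_mul_of_one_le_left hx_pos.le hc₁)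
  obtain ⟨z, hz, hxz, hxz_le⟩ :=
    exists_mem_strongStationarySet_norm_sub_eq_infDist hψ hφ hf (x := x) hxstar
  have hzs : z ∈ s := hmem hxz_le
  rw [← hxz]
  have hr₁ : ‖resid f φ x‖ ≤ 1 :=
    norm_resid_le_one_of_norm_sub_le hφ hxstar.1 hLg (hlipg x hxs xstar (hmem le_rfl)) hx
  have hrz : ‖resid f φ x‖ ≤ (2 + Lg) * ‖x - z‖ :=
    norm_resid_le_mul_norm_sub hφ hz.1 (hlipg x hxs z hzs)
  have hxz₁ : ‖x - z‖ ≤ 1 :=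
    (hxz_le.trans hx).trans (div_le_one_of_le₀ (by linarith) (by linarith))
  have hβq : β * ‖x - z‖ ≤ ‖resid f φ x‖ ^ q := hxz ▸ herrbd x hxs
  have hβδ : β * ‖x - z‖ ≤ ‖resid f φ x‖ ^ δ :=
    hβq.trans (Real.rpow_le_rpow_of_exponent_ge hr hr₁ hδq)
  have hHess : ‖fderiv ℝ (gradient f) x‖ ≤ Lg :=
    norm_fderiv_le_of_forall_mem_closedBall (by positivity) hLg fun y hy ↦ hlipg y hy x hxs
  have hΛA : Λ * ‖A‖ ^ 2 ≤ a * L * ‖x - z‖ :=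
    hL ▸ mul_norm_sq_le_of_mem_strongStationarySet (by linarith) hLψ hΛ hz (hlipψ x hxs z hzs)
  have hstep : ‖xhat - x‖ ≤ c * ‖x - z‖ :=
    (norm_step_le_mul_norm_sub hψ hφ hf hs hLψ hlipψ hΛ₀
      (hΛ ▸ inner_add_mul_max_neg_lambdaMin_nonneg ha) hxs hzs hz.1 hHess hL (by linarith) hνmin
      hδ₀ hτ hθ hβ hr hrz hxz₁ hβδ hΛA hμ_ge hμ_le hinex).trans (by gcongr)
  have hxhat : xhat ∈ s := mem_closedBall_iff_norm.2 (hstep.trans (by gcongr))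
  have hres := norm_resid_step_le hψ hφ hf hs hLψ hlipψ hΛ₀ hμ hxs hxhat hL hΛA hμ_le hinex hstep
  have hP : 0 ≤ c ^ 2 * L / 2 + a * c * L := by positivity
  have hQ : 0 ≤ c * νbar := by positivity
  refine ⟨hres.trans (add_le_mul_rpow_min hθ hP hQ hβ hδq hr hr₁ (norm_nonneg _) hβq), ?_⟩
  exact le_mul_rpow_of_mul_le_rpow hβ (hδ₀.trans hδq) (norm_nonneg _) (by positivity)
    (norm_nonneg _) (herrbd xhat hxhat) (hres.trans (add_le_mul_rpow_one_add hθ hP hQ hδ₀ hδ₁ hτ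
      hr.le (by linarith) (norm_nonneg _) hxz₁ hrz))

/-- Lemma 5.6: with `c` as in Lemma 5.5, `ε₂ = min{1/(2+L_g), 1/(aL_ψ‖A‖), ε₀/(1+c)}`,
`ĉ = (c²L + 2acL_ψ‖A‖³ + 2βcν̄)/(2β²) + θ` and
`c̃ = (1/β)(c²L/2 + acL_ψ‖A‖³ + cν̄(2+L_g)^δ + θ(2+L_g)^{1+τ})^q`, for every `k ∈ K` with
`xᵏ ∈ B_{ε₂}(x*)`: `‖r(x̂ᵏ)‖ ≤ ĉ‖r(xᵏ)‖^{min{δ+q, 1+τ}}` and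
`dist(x̂ᵏ, X*) ≤ c̃·dist(xᵏ, X*)^{(1+δ)q}`. -/
theorem stmt_17 {n m : ℕ}
    -- problem data: f(x) = ψ(Ax − b), F = f + φ bounded below, φ convex, ψ C²
    (ψ : EuclideanSpace ℝ (Fin m) → ℝ)
    (A : EuclideanSpace ℝ (Fin n) →L[ℝ] EuclideanSpace ℝ (Fin m))
    (b : EuclideanSpace ℝ (Fin m))
    (φ : EuclideanSpace ℝ (Fin n) → ℝ)
    (hψ : ContDiff ℝ 2 ψ) (hφ : ConvexOn ℝ Set.univ φ)
    (f F : EuclideanSpace ℝ (Fin n) → ℝ)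
    (hf : ∀ y, f y = ψ (A y - b)) (hF : ∀ y, F y = f y + φ y)
    (hFbdd : BddBelow (Set.range F))
    -- algorithm parameters
    (c₁ c₂ σ₁ σ₂ η θ α a νmin ν₀ νbar δ τ pmin κ : ℝ)
    (hc₁ : 0 < c₁) (hc₁' : c₁ < 1) (hc₂ : c₁ < c₂) (hc₂' : c₂ < 1)
    (hσ₁ : 0 < σ₁) (hσ₁' : σ₁ < 1) (hσ₂ : 1 < σ₂)
    (hη : 0 < η) (hη' : η < 1) (hθ : 0 < θ) (hθ' : θ < 1)
    (hα : 0 < α) (hα' : α < 1) (ha : 1 ≤ a)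
    (hνmin : 0 < νmin) (hν₀a : νmin ≤ ν₀) (hν₀b : ν₀ ≤ νbar)
    (hδ0 : 0 < δ) (hδ1 : δ ≤ 1) (hτ : δ ≤ τ)
    (hpmin : 0 < pmin) (hpmin' : pmin < 1 / 2) (hκ : 1 + δ < κ)
    -- iterates and regularization sequences
    (x xhat : ℕ → EuclideanSpace ℝ (Fin n)) (ν rbar μ : ℕ → ℝ)
    (hν0 : ν 0 = ν₀) (hrbar0 : rbar 0 = ‖resid f φ (x 0)‖)
    (hμ : ∀ k, μ k = ν k * rbar k ^ δ)
    -- Λ_k, H_k + μ_k I =: G_k, the models q_k, q̂_k, and the subproblem residual R_k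
    (Λ : ℕ → ℝ)
    (hΛ : ∀ k, Λ k = a * max (-(lambdaMin (fderiv ℝ (gradient ψ) (A (x k) - b)))) 0)
    (G : ℕ → EuclideanSpace ℝ (Fin n) →L[ℝ] EuclideanSpace ℝ (Fin n))
    (hG : ∀ k, G k = fderiv ℝ (gradient f) (x k)
        + Λ k • ((ContinuousLinearMap.adjoint A).comp A)
        + μ k • ContinuousLinearMap.id ℝ (EuclideanSpace ℝ (Fin n)))
    (q qhat : ℕ → EuclideanSpace ℝ (Fin n) → ℝ)
    (hq : ∀ k y, q k y = f (x k) + ⟪gradient f (x k), y - x k⟫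
        + (1 / 2) * ⟪y - x k, (fderiv ℝ (gradient f) (x k)) (y - x k)⟫ + φ y)
    (hqhat : ∀ k y, qhat k y = f (x k) + ⟪gradient f (x k), y - x k⟫
        + (1 / 2) * ⟪y - x k, (G k) (y - x k)⟫ + φ y)
    (R : ℕ → EuclideanSpace ℝ (Fin n) → EuclideanSpace ℝ (Fin n))
    (hR : ∀ k y, R k y = y - proxPt φ (y - gradient f (x k) - (G k) (y - x k)))
    -- the inexactness criteria satisfied by x̂ᵏ
    (hinex1 : ∀ k, ‖R k (xhat k)‖ ≤
        θ * min ‖resid f φ (x k)‖ (‖resid f φ (x k)‖ ^ (1 + τ)))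
    (hinex2 : ∀ k, α * μ k / 2 * ‖xhat k - x k‖ ^ 2 ≤ F (x k) - qhat k (xhat k))
    -- dᵏ, pred_k, ared_k, ρ_k
    (d : ℕ → EuclideanSpace ℝ (Fin n)) (hd : ∀ k, d k = xhat k - x k)
    (pred ared ρ : ℕ → ℝ)
    (hpred : ∀ k, pred k = F (x k) - q k (xhat k))
    (hared : ∀ k, ared k = F (x k) - F (xhat k))
    (hρ : ∀ k, ρ k = ared k / pred k)
    -- update rules (unsuccessful / successful / highly successful iterations)
    (unsucc : ℕ → Prop)
    (hunsucc : ∀ k, unsucc k ↔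
        pred k ≤ pmin * (1 - θ) * ‖d k‖ *
          min ‖resid f φ (x k)‖ (‖resid f φ (x k)‖ ^ κ) ∨ ρ k ≤ c₁)
    (hupd : ∀ k,
        (unsucc k → x (k + 1) = x k ∧ ν (k + 1) = σ₂ * ν k) ∧
        (¬unsucc k → x (k + 1) = xhat k ∧
          (ρ k ≤ c₂ → ν (k + 1) = min (ν k) νbar) ∧
          (c₂ < ρ k → ν (k + 1) = min (max (σ₁ * ν k) νmin) νbar)))
    (hrbarupd : ∀ k,
        (‖resid f φ (x (k + 1))‖ ≤ η * rbar k → rbar (k + 1) = ‖resid f φ (x (k + 1))‖) ∧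
        (¬‖resid f φ (x (k + 1))‖ ≤ η * rbar k → rbar (k + 1) = rbar k))
    -- no iterate is stationary (otherwise the algorithm terminates)
    (hrne : ∀ k, resid f φ (x k) ≠ 0)
    -- the index set K
    (K : Set ℕ)
    (hK : K = {0} ∪ {k | 1 ≤ k ∧ ‖resid f φ (x k)‖ ≤ η * rbar (k - 1)})
    -- local assumptions: X* = set of strongly stationary points, x* an accumulation
    -- point of {xᵏ}_{k∈K} lying in X*
    (Xstar : Set (EuclideanSpace ℝ (Fin n)))
    (hXstar : Xstar = {y | -gradient f y ∈ subdiff φ y ∧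
        ∀ u, 0 ≤ ⟪(fderiv ℝ (gradient ψ) (A y - b)) u, u⟫})
    (hXne : Xstar.Nonempty)
    (xstar : EuclideanSpace ℝ (Fin n)) (hxstar : xstar ∈ Xstar)
    (hacc : MapClusterPt xstar (atTop ⊓ 𝓟 K) x)
    -- local Lipschitz continuity of ∇²ψ near x*
    (ε Lψ : ℝ) (hε : 0 < ε) (hLψ : 0 < Lψ)
    (hlipψ : ∀ u ∈ closedBall xstar ε, ∀ v ∈ closedBall xstar ε,
      ‖fderiv ℝ (gradient ψ) (A u - b) - fderiv ℝ (gradient ψ) (A v - b)‖ ≤ Lψ * ‖A u - A v‖)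
    -- Hölderian local error bound of order qq on X*
    (β qq : ℝ) (hβ : 0 < β) (hqq : max δ (1 - δ) < qq)
    (herrbd : ∀ y ∈ closedBall xstar ε, β * infDist y Xstar ≤ ‖resid f φ y‖ ^ qq)
    -- derived constants: ε₀, L = ‖A‖³Lψ, and a Lipschitz constant L_g of ∇f on B_{ε₀}(x*)
    (ε₀ L Lg : ℝ) (hε₀ : ε₀ = min ε (ε / ‖A‖)) (hL : L = ‖A‖ ^ 3 * Lψ) (hLg : 0 < Lg)
    (hlipg : ∀ u ∈ closedBall xstar ε₀, ∀ v ∈ closedBall xstar ε₀,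
      ‖gradient f u - gradient f v‖ ≤ Lg * ‖u - v‖)
    (c ε₂ chat ctilde : ℝ)
    (hc : c = νmin⁻¹ * θ * (2 + Lg) ^ (1 + τ - δ) * (1 + Lg + a * L + νbar * (2 + Lg) ^ δ)
        + (L + 2 * a * L) / (2 * νmin * β) + 2)
    (hε₂ : ε₂ = min (1 / (2 + Lg)) (min (1 / (a * Lψ * ‖A‖)) (ε₀ / (1 + c))))
    (hchat : chat = (c ^ 2 * L + 2 * a * c * Lψ * ‖A‖ ^ 3 + 2 * β * c * νbar) / (2 * β ^ 2) + θ)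
    (hctilde : ctilde = (1 / β) *
        (c ^ 2 * L / 2 + a * c * Lψ * ‖A‖ ^ 3 + c * νbar * (2 + Lg) ^ δ
          + θ * (2 + Lg) ^ (1 + τ)) ^ qq) :
    ∀ k ∈ K, x k ∈ closedBall xstar ε₂ →
      ‖resid f φ (xhat k)‖ ≤ chat * ‖resid f φ (x k)‖ ^ min (δ + qq) (1 + τ) ∧
      infDist (xhat k) Xstar ≤ ctilde * infDist (x k) Xstar ^ ((1 + δ) * qq) := by
  intro k hk hxk
  subst hXstar hK
  obtain ⟨hμ_ge, hμ_le⟩ := mul_rpow_le_and_le_mul_rpow_of_regularization hη' hσ₂.le hνmin.le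
    (hν0 ▸ ⟨hν₀a, hν₀b⟩) (fun j ↦ norm_pos_iff.2 (hrne j)) hrbar0 hμ
    (fun j hj ↦ ((hupd j).1 hj).imp_left (congrArg (‖resid f φ ·‖)))
    (fun j hj ↦ (le_or_gt (ρ j) c₂).imp ((hupd j).2 hj).2.1 ((hupd j).2 hj).2.2)
    (fun j ↦ (hrbarupd j).1) (fun j ↦ (hrbarupd j).2) hk
  have hinex : ‖subproblemResid f φ A (Λ k) (μ k) (x k) (xhat k)‖
      ≤ θ * ‖resid f φ (x k)‖ ^ (1 + τ) := by
    have hle := (hinex1 k).trans (mul_le_mul_of_nonneg_left (min_le_right _ _) hθ.le)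
    rwa [hR, hG, sub_sub] at hle
  have hνbar : 0 < νbar := (hνmin.trans_le hν₀a).trans_le hν₀b
  have hc₀ : 0 < 1 + c := by rw [hc, hL]; positivity
  simp only [hε₂, mem_closedBall, dist_eq_norm, le_min_iff] at hxk
  have hsub₀ := closedBall_mul_norm_sub_subset hc₀ hxk.2.2
  have hsub := hsub₀.trans (closedBall_subset_closedBall (hε₀ ▸ min_le_left ε (ε / ‖A‖)))
  have hchat' : chat = (c ^ 2 * L / 2 + a * c * L) / β ^ 2 + c * νbar / β + θ := by
    rw [hchat, hL]
    field
  have hmul : a * c * Lψ * ‖A‖ ^ 3 = a * c * L := by rw [hL]; ring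
  rw [hchat', hctilde, hmul]
  exact stmt_17_general hψ hφ hf ha hνmin hδ0.le hδ1 hτ hθ.le (hΛ k) hμ_ge hμ_le hinex
    (hrne k) hxstar hLψ.le hLg.le hL (fun u hu v hv ↦ hlipψ u (hsub hu) v (hsub hv))
    (fun u hu v hv ↦ hlipg u (hsub₀ hu) v (hsub₀ hv)) hβ ((le_max_left _ _).trans hqq.le)
    (fun y hy ↦ herrbd y (hsub hy)) (by linarith) hxk.1
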